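/- Let N ≥ 2, V > 0, κ > 0, τ > 0, and for i = 1,…,N let φ_i ≥ 0, μ_i > 0, q_i ≥ 0, and assume Σ_i φ_i < μ_j for every j and τ·Σ_i φ_i < 1. For each i let B_i = { β_{i·} ∈ ℝ^N : β_{ij} ≥ 0 for all j, Σ_j β_{ij} = φ_i }, and for β ∈ ∏_i B_i define ω_j(β) = Σ_k β_{kj}, λ(β) = Σ_k Σ_{j≠k} β_{kj}, and the cost of SBS i as C_i(β) = β_{ii}·( V/(μ_i − ω_i(β)) + κ q_i ) + Σ_{j≠i} β_{ij}·( V/(μ_j − ω_j(β)) + V·τ/(1 − τ·λ(β)) ). Then there exists β^{NE} ∈ ∏_i B_i such that for every i and every β′_{i·} ∈ B_i, C_i(β^{NE}) ≤ C_i(β^{NE}_{1·},…,β′_{i·},…,β^{NE}_{N·}); i.e., the SBS peer offloading game admits at least one Nash equilibrium. -/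

import Mathlib

/-- Dominance of a set of points w.r.t. a set of indices. -/
def ScarfDom {T I : Type} (r : I → T → ℕ) (σ : Finset T) (C : Finset I) : Prop :=
  ∀ y, ∃ i ∈ C, ∀ x ∈ σ, r i y ≤ r i x

/-- A room. -/
def ScarfRoom {T I : Type} (r : I → T → ℕ) (R : Finset T × Finset I) : Prop :=
  ScarfDom r R.1 R.2 ∧ R.1.card = R.2.card

/-- Incidence of a door and a room. -/
def ScarfInc {T I : Type} (d R : Finset T × Finset I) : Prop :=
  d.1 ⊆ R.1 ∧ R.2 ⊆ d.2

/-- A door with all colours of `d.2` but `i0`. -/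
def ScarfDoor {T I : Type} [DecidableEq I] (r : I → T → ℕ) (c : T → I) (i0 : I)
    (d : Finset T × Finset I) : Prop :=
  ScarfDom r d.1 d.2 ∧ d.2.card = d.1.card + 1 ∧ i0 ∈ d.2 ∧ d.1.image c = d.2.erase i0

theorem scarf_inc_cases {T I : Type} [DecidableEq T] [DecidableEq I]
    (τ σ : Finset T) (D C : Finset I) (h1 : D.card = τ.card + 1) (h2 : σ.card = C.card)
    (h3 : τ ⊆ σ) (h4 : C ⊆ D) :
    (∃ x, x ∉ τ ∧ σ = insert x τ ∧ C = D) ∨ (∃ j ∈ D, σ = τ ∧ C = D.erase j) := by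
  have a := Finset.card_le_card h3
  have b := Finset.card_le_card h4
  by_cases h : σ.card = τ.card
  · right
    have e : τ = σ := Finset.eq_of_subset_of_card_le h3 (by omega)
    have : (D \ C).card = 1 := by rw [Finset.card_sdiff_of_subset h4]; omega
    obtain ⟨j, hj⟩ := Finset.card_eq_one.1 this
    have hjm : j ∈ D \ C := by simp [hj]
    refine ⟨j, (Finset.mem_sdiff.1 hjm).1, e.symm, ?_⟩
    rw [Finset.erase_eq, ← hj, Finset.sdiff_sdiff_eq_self h4]
  · left
    have e : C = D := Finset.eq_of_subset_of_card_le h4 (by omega)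
    have : (σ \ τ).card = 1 := by
      rw [Finset.card_sdiff_of_subset h3]; subst e; omega
    obtain ⟨x, hx⟩ := Finset.card_eq_one.1 this
    have hxm : x ∈ σ \ τ := by simp [hx]
    refine ⟨x, (Finset.mem_sdiff.1 hxm).2, ?_, e⟩
    rw [Finset.insert_eq, ← hx, Finset.sdiff_union_of_subset h3]

theorem scarf_door_two {T I : Type} [Fintype T] [DecidableEq T] [DecidableEq I]
    (r : I → T → ℕ) (hr : ∀ i, Function.Injective (r i))
    (τ : Finset T) (D : Finset I) (hdom : ScarfDom r τ D) (hcard : D.card = τ.card + 1)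
    (hne : τ.Nonempty) :
    ∃ R₁ R₂ : Finset T × Finset I, R₁ ≠ R₂ ∧
      ∀ R, (ScarfRoom r R ∧ ScarfInc (τ, D) R) ↔ (R = R₁ ∨ R = R₂) := by
  classical
  have hm : ∀ i, ∃ x ∈ τ, ∀ z ∈ τ, r i x ≤ r i z := fun i =>
    Finset.exists_min_image τ (r i) hne
  choose m hmτ hmin using hm
  have huniq : ∀ i y, y ∈ τ → (∀ z ∈ τ, r i y ≤ r i z) → m i = y := fun i y hy h =>
    hr i (le_antisymm (hmin i y hy) (h _ (hmτ i)))
  -- surjectivity criterion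
  have hsurj : ∀ C, ScarfDom r τ C → τ ⊆ C.image m := by
    intro C hC y hy
    obtain ⟨i, hi, h⟩ := hC y
    exact Finset.mem_image.2 ⟨i, hi, huniq i y hy h⟩
  obtain ⟨i, hi, j, hj, hij, hmij⟩ : ∃ i ∈ D, ∃ j ∈ D, i ≠ j ∧ m i = m j :=
    Finset.exists_ne_map_eq_of_card_lt_of_maps_to (by omega) (fun a _ => hmτ a)
  -- any subset of D of cardinality card τ whose image covers τ misses i or j
  have hmiss : ∀ C : Finset I, C.card ≤ τ.card → τ ⊆ C.image m → ¬ (i ∈ C ∧ j ∈ C) := by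
    rintro C hC hs ⟨h1, h2⟩
    have hinj : Set.InjOn m C := by
      apply Finset.card_image_iff.1
      exact le_antisymm Finset.card_image_le (hC.trans (Finset.card_le_card hs))
    exact hij (hinj h1 h2 hmij)
  have hsurjk : ∀ k, k = i ∨ k = j → τ ⊆ (D.erase k).image m := by
    intro k hk y hy
    obtain ⟨l, hl, rfl⟩ := Finset.mem_image.1 (hsurj D hdom hy)
    rw [Finset.mem_image]
    by_cases hlk : l = k
    · subst hlk
      rcases hk with rfl | rfl
      · exact ⟨j, Finset.mem_erase.2 ⟨hij.symm, hj⟩, hmij.symm⟩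
      · exact ⟨i, Finset.mem_erase.2 ⟨hij, hi⟩, hmij⟩
    · exact ⟨l, Finset.mem_erase.2 ⟨hlk, hl⟩, rfl⟩
  let M : I → T → Prop := fun k y => ∀ l ∈ D.erase k, r l (m l) < r l y
  have hMτ : ∀ k, k = i ∨ k = j → ∀ x, M k x → x ∉ τ := by
    intro k hk x hx hxτ
    obtain ⟨l, hl, rfl⟩ := Finset.mem_image.1 (hsurjk k hk hxτ)
    exact lt_irrefl _ (hx l hl)
  have hMk : ∀ k y, M k y → (∀ z ∈ τ, r k y ≤ r k z) := by
    intro k y hy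
    obtain ⟨l, hl, h⟩ := hdom y
    by_cases hlk : l = k
    · subst hlk; exact h
    · exact absurd (hy l (Finset.mem_erase.2 ⟨hlk, hl⟩)) (not_lt.2 (h _ (hmτ l)))
  let Q : I → Finset T × Finset I → Prop := fun k R =>
    R = (τ, D.erase k) ∨ ∃ x, M k x ∧ R = (insert x τ, D)
  have hex : ∀ k, k = i ∨ k = j → ∃ R, Q k R ∧ ScarfRoom r R ∧ ScarfInc (τ, D) R := by
    intro k hk
    have hkD : k ∈ D := by rcases hk with rfl | rfl <;> assumption
    by_cases hM : ∃ y, M k y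
    · obtain ⟨x, hx, hmax⟩ := Finset.exists_max_image (Finset.univ.filter (M k)) (r k)
        (by obtain ⟨y, hy⟩ := hM; exact ⟨y, by simp [hy]⟩)
      have hx : M k x := by simpa using hx
      refine ⟨(insert x τ, D), Or.inr ⟨x, hx, rfl⟩, ⟨?_, ?_⟩, ?_, ?_⟩
      · intro y
        by_cases hy : M k y
        · refine ⟨k, hkD, ?_⟩
          intro z hz
          rcases Finset.mem_insert.1 hz with rfl | hz
          · exact hmax y (by simp [hy])
          · exact hMk k y hy z hz
        · simp only [M, not_forall, not_lt] at hy
          obtain ⟨l, hl, h⟩ := hy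
          refine ⟨l, (Finset.mem_erase.1 hl).2, ?_⟩
          intro z hz
          rcases Finset.mem_insert.1 hz with rfl | hz
          · exact h.trans (hx l hl).le
          · exact h.trans (hmin l z hz)
      · simp only
        rw [Finset.card_insert_of_notMem (hMτ k hk x hx), hcard]
      · exact Finset.subset_insert _ _
      · exact Finset.Subset.refl _
    · refine ⟨(τ, D.erase k), Or.inl rfl, ⟨?_, ?_⟩, Finset.Subset.refl _, Finset.erase_subset _ _⟩
      · intro y
        have hy : ¬ M k y := fun h => hM ⟨y, h⟩
        simp only [M, not_forall, not_lt] at hy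
        obtain ⟨l, hl, h⟩ := hy
        exact ⟨l, hl, fun z hz => h.trans (hmin l z hz)⟩
      · simp only
        rw [Finset.card_erase_of_mem hkD]; omega
  have hun1 : ∀ k x, M k x → ¬ ScarfDom r τ (D.erase k) := by
    intro k x hx h
    obtain ⟨l, hl, h⟩ := h x
    exact absurd (hx l hl) (not_lt.2 (h _ (hmτ l)))
  have hun2 : ∀ k x x', M k x' → ScarfDom r (insert x τ) D → r k x' ≤ r k x := by
    intro k x x' hx' h
    obtain ⟨l, hl, h⟩ := h x'
    by_cases hlk : l = k
    · subst hlk; exact h _ (Finset.mem_insert_self _ _)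
    · exact absurd (hx' l (Finset.mem_erase.2 ⟨hlk, hl⟩))
        (not_lt.2 (h _ (Finset.mem_insert_of_mem (hmτ l))))
  have hun : ∀ k R R', Q k R → Q k R' → ScarfRoom r R → ScarfRoom r R' → R = R' := by
    rintro k R R' (rfl | ⟨x, hx, rfl⟩) (rfl | ⟨x', hx', rfl⟩) h1 h2
    · rfl
    · exact absurd h1.1 (hun1 k x' hx')
    · exact absurd h2.1 (hun1 k x hx)
    · have : x = x' := hr k (le_antisymm (hun2 k x' x hx h2.1) (hun2 k x x' hx' h1.1))
      rw [this]
  have hcov : ∀ R, ScarfRoom r R → ScarfInc (τ, D) R → Q i R ∨ Q j R := by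
    rintro ⟨σ, C⟩ ⟨h1, h2⟩ ⟨h3, h4⟩
    rcases scarf_inc_cases τ σ D C hcard h2 h3 h4 with ⟨x, hx, rfl, rfl⟩ | ⟨k, hk, rfl, rfl⟩
    · obtain ⟨l0, hl0, h0⟩ := h1 x
      have hs : τ ⊆ (C.filter (fun l => r l (m l) < r l x)).image m := by
        intro z hz
        obtain ⟨l, hl, h⟩ := h1 z
        have e : m l = z := huniq l z hz (fun w hw => h w (Finset.mem_insert_of_mem hw))
        refine Finset.mem_image.2 ⟨l, Finset.mem_filter.2 ⟨hl, ?_⟩, e⟩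
        rw [e]
        refine lt_of_le_of_ne (h x (Finset.mem_insert_self _ _)) ?_
        intro he
        exact hx (hr l he ▸ hz)
      have hsub : C.filter (fun l => r l (m l) < r l x) ⊆ C.erase l0 := by
        intro l hl
        rw [Finset.mem_filter] at hl
        refine Finset.mem_erase.2 ⟨?_, hl.1⟩
        rintro rfl
        exact absurd hl.2 (not_lt.2 (h0 _ (Finset.mem_insert_of_mem (hmτ _))))
      have hce : (C.erase l0).card = τ.card := by
        have hcard' : C.card = τ.card + 1 := hcard
        have hl0' : l0 ∈ C := hl0
        rw [Finset.card_erase_of_mem hl0']; omega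
      have heq : C.filter (fun l => r l (m l) < r l x) = C.erase l0 := by
        apply Finset.eq_of_subset_of_card_le hsub
        rw [hce]
        exact (Finset.card_le_card hs).trans Finset.card_image_le
      rw [heq] at hs
      have hM : M l0 x := by
        intro l hl
        rw [← heq] at hl
        exact (Finset.mem_filter.1 hl).2
      have := hmiss _ hce.le hs
      by_cases e1 : l0 = i
      · subst e1; exact Or.inl (Or.inr ⟨x, hM, rfl⟩)
      by_cases e2 : l0 = j
      · subst e2; exact Or.inr (Or.inr ⟨x, hM, rfl⟩)
      exact absurd ⟨Finset.mem_erase.2 ⟨Ne.symm e1, hi⟩, Finset.mem_erase.2 ⟨Ne.symm e2, hj⟩⟩ this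
    · have := hmiss _ (by rw [← h2]) (hsurj _ h1)
      by_cases e1 : k = i
      · subst e1; exact Or.inl (Or.inl rfl)
      by_cases e2 : k = j
      · subst e2; exact Or.inr (Or.inl rfl)
      exact absurd ⟨Finset.mem_erase.2 ⟨Ne.symm e1, hi⟩, Finset.mem_erase.2 ⟨Ne.symm e2, hj⟩⟩ this
  have hdis : ∀ R, Q i R → Q j R → False := by
    rintro R (rfl | ⟨x, hx, rfl⟩) (h | ⟨x', hx', h⟩)
    · have h := congrArg Prod.snd h
      simp only at h
      have : i ∈ D.erase i := by rw [h]; exact Finset.mem_erase.2 ⟨hij, hi⟩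
      simp at this
    · have h := congrArg Prod.snd h
      simp only at h
      have : i ∈ D.erase i := by rw [h]; exact hi
      simp at this
    · have h := congrArg Prod.snd h
      simp only at h
      have : j ∈ D.erase j := by rw [← h]; exact hj
      simp at this
    · have h := congrArg Prod.fst h
      simp only at h
      have hxx : x = x' := by
        have : x ∈ insert x' τ := by rw [← h]; exact Finset.mem_insert_self _ _
        rcases Finset.mem_insert.1 this with e | e
        · exact e
        · exact absurd e (hMτ i (Or.inl rfl) x hx)
      subst hxx
      obtain ⟨l, hl, hh⟩ := hdom x
      by_cases e : l = i
      · subst e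
        exact absurd (hx' l (Finset.mem_erase.2 ⟨hij, hl⟩)) (not_lt.2 (hh _ (hmτ l)))
      · exact absurd (hx l (Finset.mem_erase.2 ⟨e, hl⟩)) (not_lt.2 (hh _ (hmτ l)))
  obtain ⟨R₁, q1, r1, s1⟩ := hex i (Or.inl rfl)
  obtain ⟨R₂, q2, r2, s2⟩ := hex j (Or.inr rfl)
  refine ⟨R₁, R₂, ?_, ?_⟩
  · rintro rfl; exact hdis _ q1 q2
  · intro R
    constructor
    · rintro ⟨h1, h2⟩
      rcases hcov R h1 h2 with h | h
      · exact Or.inl (hun i _ _ h q1 h1 r1)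
      · exact Or.inr (hun j _ _ h q2 h1 r2)
    · rintro (rfl | rfl)
      · exact ⟨r1, s1⟩
      · exact ⟨r2, s2⟩

theorem scarf_room_even {T I : Type} [DecidableEq T] [DecidableEq I]
    (r : I → T → ℕ) (c : T → I) (i0 : I) (R : Finset T × Finset I) (hR : ScarfRoom r R)
    (hc : R.1.image c ≠ R.2) :
    (∀ d, ¬ (ScarfDoor r c i0 d ∧ ScarfInc d R)) ∨
    ∃ d₁ d₂ : Finset T × Finset I, d₁ ≠ d₂ ∧
      ∀ d, (ScarfDoor r c i0 d ∧ ScarfInc d R) ↔ (d = d₁ ∨ d = d₂) := by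
  obtain ⟨σ, C⟩ := R
  obtain ⟨hdom, hcard⟩ := hR
  simp only at hdom hcard hc
  -- description of incident doors
  have key : ∀ d : Finset T × Finset I, (ScarfDoor r c i0 d ∧ ScarfInc d (σ, C)) ↔
      (i0 ∈ C ∧ ((∃ x ∈ σ, (σ.erase x).image c = C.erase i0 ∧ d = (σ.erase x, C)) ∨
       (∃ j, j ∉ C ∧ σ.image c = (insert j C).erase i0 ∧ d = (σ, insert j C)))) := by
    rintro ⟨τ, D⟩
    constructor
    · rintro ⟨⟨h1, h2, h3, h4⟩, h5, h6⟩
      simp only at h1 h2 h3 h4 h5 h6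
      rcases scarf_inc_cases τ σ D C h2 hcard h5 h6 with ⟨x, hx, rfl, rfl⟩ | ⟨k, hk, rfl, rfl⟩
      · refine ⟨h3, Or.inl ⟨x, Finset.mem_insert_self _ _, ?_, ?_⟩⟩ <;>
          simp [Finset.erase_insert hx, h4]
      · have hk0 : k ≠ i0 := by rintro rfl; exact hc h4
        refine ⟨Finset.mem_erase.2 ⟨hk0.symm, h3⟩, Or.inr ⟨k, by simp, ?_, ?_⟩⟩ <;>
          simp [Finset.insert_erase hk, h4]
    · rintro ⟨h0, ⟨x, hx, h1, h2⟩ | ⟨j, hj, h1, h2⟩⟩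
      · obtain ⟨rfl, rfl⟩ := Prod.mk.inj h2
        refine ⟨⟨?_, ?_, h0, h1⟩, Finset.erase_subset _ _, Finset.Subset.refl _⟩
        · intro y
          obtain ⟨i, hi, h⟩ := hdom y
          exact ⟨i, hi, fun z hz => h z (Finset.mem_of_mem_erase hz)⟩
        · simp only
          rw [Finset.card_erase_of_mem hx]
          have := Finset.card_pos.2 ⟨x, hx⟩
          omega
      · obtain ⟨rfl, rfl⟩ := Prod.mk.inj h2
        refine ⟨⟨?_, ?_, Finset.mem_insert_of_mem h0, h1⟩, Finset.Subset.refl _,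
          Finset.subset_insert _ _⟩
        · intro y
          obtain ⟨i, hi, h⟩ := hdom y
          exact ⟨i, Finset.mem_insert_of_mem hi, h⟩
        · simp only
          rw [Finset.card_insert_of_notMem hj, hcard]
  by_cases h0 : i0 ∈ C
  swap
  · left; intro d hd; exact h0 ((key d).1 hd).1
  have hC1 : (C.erase i0).card + 1 = C.card := Finset.card_erase_add_one h0
  by_cases hA : ∃ x ∈ σ, (σ.erase x).image c = C.erase i0
  · right
    obtain ⟨x, hx, hxc⟩ := hA
    have hσx : (σ.erase x).card + 1 = σ.card := Finset.card_erase_add_one hx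
    have hinj : Set.InjOn c (σ.erase x) := by
      apply Finset.card_image_iff.1
      rw [hxc]; omega
    have him : σ.image c = insert (c x) (C.erase i0) := by
      rw [← hxc, ← Finset.image_insert, Finset.insert_erase hx]
    have hx0 : c x ≠ i0 := by
      intro e
      apply hc
      rw [him, e, Finset.insert_erase h0]
    by_cases hxC : c x ∈ C
    · have hm : c x ∈ (σ.erase x).image c := by
        rw [hxc]; exact Finset.mem_erase.2 ⟨hx0, hxC⟩
      obtain ⟨x', hx', hcx⟩ := Finset.mem_image.1 hm
      have hx'σ := Finset.mem_of_mem_erase hx'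
      have hne : x' ≠ x := Finset.ne_of_mem_erase hx'
      have him2 : σ.image c = C.erase i0 := by
        rw [him, Finset.insert_eq_self]
        exact Finset.mem_erase.2 ⟨hx0, hxC⟩
      refine ⟨(σ.erase x, C), (σ.erase x', C), ?_, ?_⟩
      · intro h
        have h := congrArg Prod.fst h
        simp only at h
        have : x ∈ σ.erase x := by rw [h]; exact Finset.mem_erase.2 ⟨hne.symm, hx⟩
        simp at this
      · intro d
        rw [key]
        constructor
        · rintro ⟨-, ⟨y, hy, h1, rfl⟩ | ⟨j, hj, h1, rfl⟩⟩
          · by_cases hyx : y = x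
            · left; rw [hyx]
            · right
              have : c y ∈ (σ.erase y).image c := by
                rw [h1, ← hxc]
                exact Finset.mem_image_of_mem _ (Finset.mem_erase.2 ⟨hyx, hy⟩)
              obtain ⟨z, hz, hzy⟩ := Finset.mem_image.1 this
              have hzy' := Finset.ne_of_mem_erase hz
              have hzσ := Finset.mem_of_mem_erase hz
              have hzx : z = x := by
                by_contra hzx
                exact hzy' (hinj (by simp [hzx, hzσ]) (by simp [hyx, hy]) hzy)
              subst hzx
              have : y = x' := hinj (by simp [hyx, hy]) (Finset.mem_coe.2 hx') (by rw [hcx, hzy])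
              rw [this]
          · exfalso
            rw [him2] at h1
            have hj0 : j ≠ i0 := by rintro rfl; exact hj h0
            have : j ∈ C.erase i0 := by rw [h1]; simp [hj0]
            exact hj (Finset.mem_of_mem_erase this)
        · rintro (rfl | rfl)
          · exact ⟨h0, Or.inl ⟨x, hx, hxc, rfl⟩⟩
          · refine ⟨h0, Or.inl ⟨x', hx'σ, ?_, rfl⟩⟩
            rw [← him2]
            apply Finset.Subset.antisymm (Finset.image_subset_image (Finset.erase_subset _ _))
            intro k hk
            obtain ⟨z, hz, rfl⟩ := Finset.mem_image.1 hk
            by_cases e : z = x'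
            · subst e
              rw [hcx]
              exact Finset.mem_image_of_mem _ (Finset.mem_erase.2 ⟨hne.symm, hx⟩)
            · exact Finset.mem_image_of_mem _ (Finset.mem_erase.2 ⟨e, hz⟩)
    · refine ⟨(σ.erase x, C), (σ, insert (c x) C), ?_, ?_⟩
      · intro h
        have h := congrArg Prod.snd h
        simp only at h
        exact hxC (by rw [h]; simp)
      · intro d
        rw [key]
        constructor
        · rintro ⟨-, ⟨y, hy, h1, rfl⟩ | ⟨j, hj, h1, rfl⟩⟩
          · by_cases hyx : y = x
            · left; rw [hyx]
            · exfalso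
              have : c x ∈ C.erase i0 := by
                rw [← h1]
                exact Finset.mem_image_of_mem _ (Finset.mem_erase.2 ⟨Ne.symm hyx, hx⟩)
              exact hxC (Finset.mem_of_mem_erase this)
          · right
            have : c x ∈ (insert j C).erase i0 := by
              rw [← h1]; exact Finset.mem_image_of_mem _ hx
            rcases Finset.mem_insert.1 (Finset.mem_of_mem_erase this) with e | e
            · rw [e]
            · exact absurd e hxC
        · rintro (rfl | rfl)
          · exact ⟨h0, Or.inl ⟨x, hx, hxc, rfl⟩⟩
          · refine ⟨h0, Or.inr ⟨c x, hxC, ?_, rfl⟩⟩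
            rw [him, Finset.erase_insert_of_ne hx0]
  · left
    intro d hd
    obtain ⟨-, ⟨x, hx, h1, -⟩ | ⟨j, hj, h1, -⟩⟩ := (key d).1 hd
    · exact hA ⟨x, hx, h1⟩
    · have hj0 : j ≠ i0 := by rintro rfl; exact hj h0
      have : j ∈ σ.image c := by rw [h1]; simp [hj0]
      obtain ⟨x, hx, rfl⟩ := Finset.mem_image.1 this
      apply hA
      refine ⟨x, hx, ?_⟩
      have hci : (σ.image c).card = σ.card := by
        rw [h1, Finset.card_erase_of_mem (Finset.mem_insert_of_mem h0),
          Finset.card_insert_of_notMem hj]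
        omega
      have hinj : Set.InjOn c σ := Finset.card_image_iff.1 hci
      ext k
      constructor
      · intro hk
        obtain ⟨z, hz, rfl⟩ := Finset.mem_image.1 hk
        have hzσ := Finset.mem_of_mem_erase hz
        have h2 : c z ∈ (insert (c x) C).erase i0 := by
          rw [← h1]; exact Finset.mem_image_of_mem _ hzσ
        rw [Finset.mem_erase, Finset.mem_insert] at h2
        rcases h2 with ⟨h2, e | e⟩
        · exact absurd (hinj hzσ hx e) (Finset.ne_of_mem_erase hz)
        · exact Finset.mem_erase.2 ⟨h2, e⟩
      · intro hk
        rw [Finset.mem_erase] at hk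
        have h2 : k ∈ σ.image c := by
          rw [h1]; simp [hk.1, hk.2]
        obtain ⟨z, hz, rfl⟩ := Finset.mem_image.1 h2
        refine Finset.mem_image_of_mem _ (Finset.mem_erase.2 ⟨?_, hz⟩)
        rintro rfl
        exact hj hk.2

theorem scarf_colorful {T I : Type} [Fintype T] [DecidableEq T] [Fintype I] [DecidableEq I]
    [Nonempty T] (r : I → T → ℕ) (hr : ∀ i, Function.Injective (r i)) (c : T → I) (i0 : I) :
    ∃ (σ : Finset T) (C : Finset I), ScarfDom r σ C ∧ σ.image c = C := by
  classical
  by_contra hno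
  push Not at hno
  let rooms : Finset (Finset T × Finset I) := Finset.univ.filter (ScarfRoom r)
  let doors : Finset (Finset T × Finset I) := Finset.univ.filter (ScarfDoor r c i0)
  have h := Finset.sum_card_bipartiteAbove_eq_sum_card_bipartiteBelow
    (s := doors) (t := rooms) ScarfInc
  -- rooms side is even
  have he : Even (∑ b ∈ rooms, (doors.bipartiteBelow ScarfInc b).card) := by
    apply Finset.even_sum
    intro R hR
    have hR : ScarfRoom r R := by simpa [rooms] using hR
    rcases scarf_room_even r c i0 R hR (hno R.1 R.2 hR.1) with h | ⟨d₁, d₂, hne, h⟩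
    · have : doors.bipartiteBelow ScarfInc R = ∅ := by
        ext d
        have := h d
        simpa [Finset.bipartiteBelow, doors] using this
      rw [this]; simp
    · have : doors.bipartiteBelow ScarfInc R = {d₁, d₂} := by
        ext d
        have := h d
        simpa [Finset.bipartiteBelow, doors] using this
      rw [this, Finset.card_pair hne]; exact even_two
  have hd0 : ScarfDoor r c i0 (∅, {i0}) := by
    refine ⟨fun y => ⟨i0, by simp, by simp⟩, by simp, by simp, by simp⟩
  have ho : Odd (∑ a ∈ doors, (rooms.bipartiteAbove ScarfInc a).card) := by
    rw [← Finset.add_sum_erase doors _ (show ((∅, {i0}) : Finset T × Finset I) ∈ doors by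
      simpa [doors] using hd0)]
    apply Odd.add_even
    · obtain ⟨x, -, hx⟩ := Finset.exists_max_image (Finset.univ : Finset T) (r i0)
        Finset.univ_nonempty
      have : rooms.bipartiteAbove ScarfInc (∅, {i0}) = {({x}, {i0})} := by
        ext ⟨σ, C⟩
        simp only [Finset.bipartiteAbove, rooms, Finset.mem_filter, Finset.mem_univ, true_and,
          Finset.mem_singleton]
        constructor
        · rintro ⟨⟨h1, h2⟩, h3, h4⟩
          rcases scarf_inc_cases ∅ σ {i0} C (by simp) h2 h3 h4 with
            ⟨y, hy, rfl, rfl⟩ | ⟨k, hk, rfl, rfl⟩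
          · obtain ⟨l, hl, h⟩ := h1 x
            have hl : l = i0 := by simpa using hl
            subst hl
            have : x = y := hr l (le_antisymm (h y (by simp)) (hx y (by simp)))
            rw [this]; simp
          · exfalso
            have hk : k = i0 := by simpa using hk
            subst hk
            obtain ⟨l, hl, h⟩ := h1 x
            simp at hl
        · intro h
          obtain ⟨rfl, rfl⟩ := Prod.mk.inj h
          refine ⟨⟨fun y => ⟨i0, by simp, ?_⟩, by simp⟩, by simp, by simp⟩
          intro z hz
          have hz : z = x := by simpa using hz
          rw [hz]; exact hx y (by simp)
      rw [this]; simp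
    · apply Finset.even_sum
      rintro ⟨τ, D⟩ hd
      rw [Finset.mem_erase] at hd
      have hD : ScarfDoor r c i0 (τ, D) := by simpa [doors] using hd.2
      obtain ⟨h1, h2, h3, h4⟩ := hD
      simp only at h1 h2 h3 h4
      have hne : τ.Nonempty := by
        rw [Finset.nonempty_iff_ne_empty]
        rintro rfl
        apply hd.1
        obtain ⟨k, rfl⟩ := Finset.card_eq_one.1 (by simpa using h2)
        have : i0 = k := by simpa using h3
        rw [this]
      obtain ⟨R₁, R₂, hR, h⟩ := scarf_door_two r hr τ D h1 h2 hne
      have : rooms.bipartiteAbove ScarfInc (τ, D) = {R₁, R₂} := by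
        ext R
        have := h R
        simpa [Finset.bipartiteAbove, rooms] using this
      rw [this, Finset.card_pair hR]; exact even_two
  rw [h] at ho
  exact (Nat.not_even_iff_odd.2 ho) he

theorem grid_nat {ι : Type} [Fintype ι] [DecidableEq ι] [Nonempty ι] (n : ℕ)
    (c : (ι → ℕ) → ι) :
    ∃ (C : Finset ι) (S : Set (ι → ℕ)), S.Nonempty ∧ (∀ x ∈ S, ∑ i, x i = n) ∧
      (∀ k ∈ C, ∃ x ∈ S, c x = k) ∧ (∀ x ∈ S, ∀ i, i ∉ C → x i ≤ Fintype.card ι) ∧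
      (∀ x ∈ S, ∀ y ∈ S, ∀ i, x i ≤ y i + Fintype.card ι) := by
  classical
  let T := {w : ι → Fin (n + 1) // ∑ i, (w i : ℕ) = n}
  let v : T → ι → ℕ := fun w i => (w.1 i : ℕ)
  have hmk : ∀ y : ι → ℕ, ∑ i, y i = n → ∃ w : T, v w = y := by
    intro y hy
    have hle : ∀ i, y i < n + 1 := fun i => by
      have := Finset.single_le_sum (f := y) (fun j _ => Nat.zero_le _) (Finset.mem_univ i)
      omega
    exact ⟨⟨fun i => ⟨y i, hle i⟩, by simpa using hy⟩, rfl⟩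
  obtain ⟨i0⟩ := ‹Nonempty ι›
  have : Nonempty ι := ⟨i0⟩
  have : Nonempty T := by
    obtain ⟨w, -⟩ := hmk (Pi.single i0 n) (by simp)
    exact ⟨w⟩
  let e := Fintype.equivFin T
  let r : ι → T → ℕ := fun i w => v w i * Fintype.card T + (e w : ℕ)
  have hmono : ∀ i w w', r i w ≤ r i w' → v w i ≤ v w' i := by
    intro i w w' h
    by_contra hlt
    push Not at hlt
    have h1 := (e w').2
    have h2 : (v w' i + 1) * Fintype.card T ≤ v w i * Fintype.card T :=
      Nat.mul_le_mul_right _ hlt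
    simp only [r] at h
    rw [add_mul, one_mul] at h2
    omega
  have hr : ∀ i, Function.Injective (r i) := by
    intro i w w' h
    have h1 := hmono i w w' h.le
    have h2 := hmono i w' w h.ge
    have h3 : v w i = v w' i := le_antisymm h1 h2
    simp only [r, h3] at h
    have : (e w : ℕ) = e w' := by omega
    exact e.injective (Fin.ext this)
  obtain ⟨σ, C, hdom, hcol⟩ := scarf_colorful r hr (fun w => c (v w)) i0
  have hCne : C.Nonempty := by
    obtain ⟨i, hi, -⟩ := hdom (Classical.arbitrary T)
    exact ⟨i, hi⟩
  have hσ : σ.Nonempty := by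
    rw [← hcol] at hCne
    exact Finset.image_nonempty.1 hCne
  have hm : ∀ i, ∃ x ∈ σ, ∀ z ∈ σ, v x i ≤ v z i := fun i =>
    Finset.exists_min_image σ (fun w => v w i) hσ
  choose m hmσ hmin using hm
  have hbig : n < ∑ i ∈ C, (v (m i) i + 1) := by
    by_contra hle
    push Not at hle
    obtain ⟨i1, hi1⟩ := hCne
    let y : ι → ℕ := fun i => (if i ∈ C then v (m i) i + 1 else 0) +
      (if i = i1 then n - ∑ i ∈ C, (v (m i) i + 1) else 0)
    obtain ⟨w, hw⟩ := hmk y (by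
      simp only [y, Finset.sum_add_distrib, Finset.sum_ite_mem, Finset.univ_inter,
        Finset.sum_ite_eq', Finset.mem_univ, if_true] at hle ⊢
      omega)
    obtain ⟨i, hi, h⟩ := hdom w
    have h1 := hmono i w (m i) (h _ (hmσ i))
    rw [hw] at h1
    simp only [y, hi, if_true] at h1
    omega
  rw [Finset.sum_add_distrib] at hbig
  have hCc : C.card ≤ Fintype.card ι := Finset.card_le_univ C
  simp only [Finset.sum_const, smul_eq_mul, mul_one] at hbig
  have hsum : ∀ x : T, ∑ i, v x i = n := fun x => x.2
  have hsplit : ∀ x : T, ∑ i ∈ C, v x i + ∑ i ∈ Cᶜ, v x i = n := fun x => by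
    rw [Finset.sum_add_sum_compl]; exact hsum x
  have hout : ∀ x ∈ σ, ∀ i, i ∉ C → v x i ≤ Fintype.card ι := by
    intro x hx i hi
    have h1 : v x i ≤ ∑ i ∈ Cᶜ, v x i :=
      Finset.single_le_sum (f := fun i => v x i) (fun j _ => Nat.zero_le _) (by simpa using hi)
    have h2 : ∑ i ∈ C, v (m i) i ≤ ∑ i ∈ C, v x i :=
      Finset.sum_le_sum fun i _ => hmin i x hx
    have := hsplit x
    omega
  have hin : ∀ x ∈ σ, ∀ i ∈ C, v x i ≤ v (m i) i + Fintype.card ι := by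
    intro x hx i hi
    have h2 : ∑ i ∈ C.erase i, v (m i) i ≤ ∑ i ∈ C.erase i, v x i :=
      Finset.sum_le_sum fun i _ => hmin i x hx
    have h3 := Finset.add_sum_erase C (fun i => v x i) hi
    have h4 := Finset.add_sum_erase C (fun i => v (m i) i) hi
    have := hsplit x
    omega
  refine ⟨C, v '' (σ : Set T), ?_, ?_, ?_, ?_, ?_⟩
  · exact (Finset.coe_nonempty.2 hσ).image _
  · rintro _ ⟨x, hx, rfl⟩; exact hsum x
  · intro k hk
    rw [← hcol] at hk
    obtain ⟨x, hx, h⟩ := Finset.mem_image.1 hk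
    exact ⟨v x, ⟨x, hx, rfl⟩, h⟩
  · rintro _ ⟨x, hx, rfl⟩; exact hout x hx
  · rintro _ ⟨x, hx, rfl⟩ _ ⟨y, hy, rfl⟩ i
    by_cases hi : i ∈ C
    · exact (hin x hx i hi).trans (Nat.add_le_add_right (hmin i y hy) _)
    · exact (hout x hx i hi).trans (Nat.le_add_left _ _)

open Filter Topology in
/-- Brouwer's fixed point theorem on the standard simplex. -/
theorem brouwer_simplex {ι : Type} [Fintype ι] [Nonempty ι] (f : (ι → ℝ) → ι → ℝ)
    (hf : ContinuousOn f (stdSimplex ℝ ι)) (hmaps : Set.MapsTo f (stdSimplex ℝ ι) (stdSimplex ℝ ι)) :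
    ∃ w ∈ stdSimplex ℝ ι, f w = w := by
  classical
  have hlab : ∀ x : ι → ℝ, ∃ k, x ∈ stdSimplex ℝ ι → x k ≤ f x k := by
    intro x
    by_contra h
    push Not at h
    have hx := (h (Classical.arbitrary ι)).1
    have : ∑ k, f x k < ∑ k, x k :=
      Finset.sum_lt_sum_of_nonempty Finset.univ_nonempty (fun k _ => (h k).2)
    rw [(hmaps hx).2, hx.2] at this
    exact lt_irrefl _ this
  choose col hcol using hlab
  have hstep : ∀ n : ℕ, ∃ w ∈ stdSimplex ℝ ι, ∃ X : ι → ι → ℝ, ∀ k, X k ∈ stdSimplex ℝ ι ∧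
      (∀ i, |X k i - w i| ≤ (Fintype.card ι : ℝ) * (1 / ((n : ℝ) + 1))) ∧
      X k k - (Fintype.card ι : ℝ) * (1 / ((n : ℝ) + 1)) ≤ f (X k) k := by
    intro n
    have hn : (0 : ℝ) < (n : ℝ) + 1 := by positivity
    let p : (ι → ℕ) → ι → ℝ := fun x i => (x i : ℝ) / ((n : ℝ) + 1)
    obtain ⟨C, S, ⟨w, hw⟩, hS, hC, hout, hdiam⟩ := grid_nat (n + 1) (fun x => col (p x))
    have hp : ∀ x ∈ S, p x ∈ stdSimplex ℝ ι := by
      intro x hx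
      refine ⟨fun i => by positivity, ?_⟩
      simp only [p]
      rw [← Finset.sum_div, ← Nat.cast_sum, hS x hx]
      push_cast
      exact div_self hn.ne'
    have hd : ∀ x ∈ S, ∀ y ∈ S, ∀ i, p x i - p y i ≤ (Fintype.card ι : ℝ) * (1 / ((n : ℝ) + 1)) := by
      intro x hx y hy i
      have h : (x i : ℝ) ≤ y i + Fintype.card ι := by exact_mod_cast hdiam x hx y hy i
      simp only [p]
      rw [← sub_div, mul_one_div]
      exact div_le_div_of_nonneg_right (by linarith) hn.le
    have hk : ∀ k, ∃ x ∈ S, p x k - (Fintype.card ι : ℝ) * (1 / ((n : ℝ) + 1)) ≤ f (p x) k := by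
      intro k
      by_cases hkC : k ∈ C
      · obtain ⟨x, hx, hxk⟩ := hC k hkC
        refine ⟨x, hx, ?_⟩
        have := hcol (p x) (hp x hx)
        rw [hxk] at this
        have h0 : 0 ≤ (Fintype.card ι : ℝ) * (1 / ((n : ℝ) + 1)) := by positivity
        linarith
      · refine ⟨w, hw, ?_⟩
        have h1 : (w k : ℝ) ≤ Fintype.card ι := by exact_mod_cast hout w hw k hkC
        have h2 : p w k ≤ (Fintype.card ι : ℝ) * (1 / ((n : ℝ) + 1)) := by
          simp only [p]
          rw [mul_one_div]
          exact div_le_div_of_nonneg_right h1 hn.le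
        have := (hmaps (hp w hw)).1 k
        linarith
    choose x hxS hx using hk
    refine ⟨p w, hp w hw, fun k => p (x k), fun k => ⟨hp _ (hxS k), fun i => ?_, hx k⟩⟩
    rw [abs_le]
    have h1 := hd _ (hxS k) _ hw i
    have h2 := hd _ hw _ (hxS k) i
    constructor <;> linarith
  choose w hw X hX using hstep
  obtain ⟨a, ha, φ, hφ, hlim⟩ := (isCompact_stdSimplex ℝ ι).tendsto_subseq hw
  have hε : Tendsto (fun n : ℕ => (Fintype.card ι : ℝ) * (1 / ((φ n : ℝ) + 1))) atTop (𝓝 0) := by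
    have := (tendsto_one_div_add_atTop_nhds_zero_nat (𝕜 := ℝ)).comp hφ.tendsto_atTop
    simpa using this.const_mul (Fintype.card ι : ℝ)
  have hXlim : ∀ k, Tendsto (fun n => X (φ n) k) atTop (𝓝 a) := by
    intro k
    rw [tendsto_pi_nhds] at hlim ⊢
    intro i
    have h1 : Tendsto (fun n => X (φ n) k i - w (φ n) i) atTop (𝓝 0) :=
      squeeze_zero_norm (fun n => by simpa using (hX (φ n) k).2.1 i) hε
    have := h1.add (hlim i)
    simpa using this
  have hle : ∀ k, a k ≤ f a k := by
    intro k
    have h1 : Tendsto (fun n => f (X (φ n) k)) atTop (𝓝 (f a)) := by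
      have : Tendsto (fun n => X (φ n) k) atTop (𝓝[stdSimplex ℝ ι] a) :=
        tendsto_nhdsWithin_iff.2 ⟨hXlim k, Eventually.of_forall fun n => (hX (φ n) k).1⟩
      exact (hf a ha).tendsto.comp this
    have h2 := (tendsto_pi_nhds.1 h1) k
    have h3 := ((tendsto_pi_nhds.1 (hXlim k)) k).sub hε
    rw [sub_zero] at h3
    exact le_of_tendsto_of_tendsto' h3 h2 (fun n => (hX (φ n) k).2.2)
  refine ⟨a, ha, ?_⟩
  have hsum : ∑ k, a k = ∑ k, f a k := by rw [ha.2, (hmaps ha).2]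
  funext k
  exact ((Finset.sum_eq_sum_iff_of_le (fun k _ => hle k)).1 hsum k (Finset.mem_univ k)).symm

/-- Ky Fan's inequality. -/
theorem ky_fan {E : Type} [AddCommGroup E] [Module ℝ E] [TopologicalSpace E]
    [ContinuousAdd E] [ContinuousSMul ℝ E] (K : Set E) (hK : IsCompact K) (hKc : Convex ℝ K)
    (hne : K.Nonempty) (Φ : E → E → ℝ) (hcont : ∀ γ ∈ K, ContinuousOn (fun β => Φ β γ) K)
    (hconv : ∀ β ∈ K, ConvexOn ℝ K (Φ β)) (hdiag : ∀ β ∈ K, 0 ≤ Φ β β) :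
    ∃ β ∈ K, ∀ γ ∈ K, 0 ≤ Φ β γ := by
  classical
  by_contra hno
  push Not at hno
  have hno' : ∀ β, ∃ γ, β ∈ K → γ ∈ K ∧ Φ β γ < 0 := by
    intro β
    by_cases hβ : β ∈ K
    · obtain ⟨γ, h⟩ := hno β hβ; exact ⟨γ, fun _ => h⟩
    · exact ⟨β, fun h => absurd h hβ⟩
  choose g hg using hno'
  obtain ⟨t, htK, ht⟩ := hK.elim_nhdsWithin_subcover (fun β => {z | Φ z (g β) < 0}) (by
    intro β hβ
    exact (hcont (g β) (hg β hβ).1 β hβ).eventually_lt continuousWithinAt_const (hg β hβ).2)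
  have hgK : ∀ k : t, g k ∈ K := fun k => (hg k (htK k k.2)).1
  obtain ⟨β0, hβ0⟩ := hne
  have : Nonempty t := by
    obtain ⟨k, hk, -⟩ := Set.mem_iUnion₂.1 (ht hβ0)
    exact ⟨⟨k, hk⟩⟩
  let P : (t → ℝ) → E := fun w => ∑ k, w k • g k
  have hP : ∀ w ∈ stdSimplex ℝ t, P w ∈ K := fun w hw =>
    hKc.sum_mem (fun k _ => hw.1 k) hw.2 (fun k _ => hgK k)
  have hPc : Continuous P := by
    apply continuous_finsetSum
    intro k _
    exact (continuous_apply k).smul continuous_const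
  let h : (t → ℝ) → t → ℝ := fun w k => max 0 (-Φ (P w) (g k))
  have h0 : ∀ w k, 0 ≤ h w k := fun w k => le_max_left _ _
  have hpos : ∀ w ∈ stdSimplex ℝ t, 0 < ∑ k, h w k := by
    intro w hw
    obtain ⟨k, hk, hk2⟩ := Set.mem_iUnion₂.1 (ht (hP w hw))
    apply Finset.sum_pos' (fun k _ => h0 w k)
    refine ⟨⟨k, hk⟩, Finset.mem_univ _, ?_⟩
    have : Φ (P w) (g k) < 0 := hk2
    exact lt_max_of_lt_right (by simpa using this)
  have hhc : ∀ k, ContinuousOn (fun w => h w k) (stdSimplex ℝ t) := by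
    intro k
    have : ContinuousOn (fun w => Φ (P w) (g k)) (stdSimplex ℝ t) :=
      (hcont (g k) (hgK k)).comp hPc.continuousOn hP
    exact continuousOn_const.sup this.neg
  obtain ⟨w, hw, hfix⟩ := brouwer_simplex (fun w k => h w k / ∑ l, h w l)
    (by
      rw [continuousOn_pi]
      intro k
      exact (hhc k).div (continuousOn_finsetSum _ fun l _ => hhc l)
        (fun w hw => (hpos w hw).ne'))
    (by
      intro w hw
      refine ⟨fun k => div_nonneg (h0 w k) (hpos w hw).le, ?_⟩
      rw [← Finset.sum_div, div_self (hpos w hw).ne'])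
  have hS := hpos w hw
  have hwk : ∀ k, h w k = w k * ∑ l, h w l := fun k => by
    have := congrFun hfix k
    exact (div_eq_iff hS.ne').1 this
  have hle : Φ (P w) (P w) ≤ ∑ k, w k • Φ (P w) (g k) :=
    (hconv _ (hP w hw)).map_sum_le (fun k _ => hw.1 k) hw.2 (fun k _ => hgK k)
  have hterm : ∀ k, 0 < h w k → w k • Φ (P w) (g k) < 0 := by
    intro k hk
    have h1 : 0 < w k := by
      have := hwk k
      by_contra hn
      have h2 : w k * ∑ l, h w l ≤ 0 := mul_nonpos_of_nonpos_of_nonneg (not_lt.1 hn) hS.le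
      linarith
    have h2 : Φ (P w) (g k) < 0 := by
      rcases lt_max_iff.1 hk with h | h
      · exact absurd h (lt_irrefl _)
      · linarith
    exact mul_neg_of_pos_of_neg h1 h2
  have hterm0 : ∀ k, h w k = 0 → w k • Φ (P w) (g k) = 0 := by
    intro k hk
    have := hwk k
    rw [hk] at this
    have : w k = 0 := by
      rcases mul_eq_zero.1 this.symm with h | h
      · exact h
      · exact absurd h hS.ne'
    rw [this, zero_smul]
  have hneg : ∑ k, w k • Φ (P w) (g k) < 0 := by
    obtain ⟨k, -, hk⟩ := Finset.exists_lt_of_sum_lt (s := Finset.univ) (f := fun _ : t => (0:ℝ))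
      (g := h w) (by simpa using hS)
    apply Finset.sum_neg' _ ⟨k, Finset.mem_univ _, hterm k hk⟩
    intro l _
    rcases (h0 w l).lt_or_eq with h | h
    · exact (hterm l h).le
    · exact (hterm0 l h.symm).le
  have := hdiag _ (hP w hw)
  linarith

theorem convexOn_frac {E : Type} [AddCommGroup E] [Module ℝ E] (K : Set E) (hK : Convex ℝ K)
    (l : E →ₗ[ℝ] ℝ) (D : ℝ) (hD : 0 ≤ D) (h : ∀ x ∈ K, 0 < D - l x) :
    ConvexOn ℝ K (fun x => l x / (D - l x)) := by
  refine ⟨hK, ?_⟩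
  intro x hx y hy a b ha hb hab
  have hz := h _ (hK hx hy ha hb hab)
  have hu := h x hx
  have hv := h y hy
  simp only [map_add, map_smul, smul_eq_mul] at hz ⊢
  have e : ∀ s, 0 < D - s → s / (D - s) = D / (D - s) - 1 := by
    intro s hs
    rw [eq_sub_iff_add_eq, div_add_one hs.ne']; ring_nf
  rw [e _ hz, e _ hu, e _ hv]
  have key : 1 / (D - (a * l x + b * l y)) ≤ a * (1 / (D - l x)) + b * (1 / (D - l y)) := by
    have hw : D - (a * l x + b * l y) = a * (D - l x) + b * (D - l y) := by
      linear_combination (-D) * hab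
    rw [hw] at hz ⊢
    generalize D - l x = u at *
    generalize D - l y = v at *
    rw [mul_one_div, mul_one_div, div_add_div _ _ hu.ne' hv.ne', div_le_div_iff₀ hz (by positivity)]
    have hb' : b = 1 - a := by linarith
    subst hb'
    nlinarith [mul_nonneg (mul_nonneg ha hb) (sq_nonneg (u - v))]
  have := mul_le_mul_of_nonneg_left key hD
  have e1 : D * (1 / (D - (a * l x + b * l y))) = D / (D - (a * l x + b * l y)) := by ring
  have e2 : D * (a * (1 / (D - l x)) + b * (1 / (D - l y))) =
    a * (D / (D - l x)) + b * (D / (D - l y)) := by ring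
  rw [e1, e2] at this
  linarith

/-- the SBS peer offloading game admits at least one Nash
equilibrium (Theorem 3 of the paper). -/
theorem stmt_10 (N : ℕ) (hN : 2 ≤ N) (V κ τ : ℝ) (hV : 0 < V) (hκ : 0 < κ) (hτ : 0 < τ)
    (φ μ q : Fin N → ℝ) (hφ : ∀ i, 0 ≤ φ i) (hμ : ∀ i, 0 < μ i) (hq : ∀ i, 0 ≤ q i)
    (hstab : ∀ j, (∑ i, φ i) < μ j) (hlan : τ * (∑ i, φ i) < 1)
    (B : Fin N → Set (Fin N → ℝ))
    (hB : B = fun i => {b | (∀ j, 0 ≤ b j) ∧ (∑ j, b j) = φ i})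
    (Cost : Fin N → (Fin N → Fin N → ℝ) → ℝ)
    (hCost : Cost = fun i β =>
      β i i * (V / (μ i - ∑ k, β k i) + κ * q i) +
      ∑ j ∈ Finset.univ.erase i, β i j *
        (V / (μ j - ∑ k, β k j) +
         V * τ / (1 - τ * (∑ k, ∑ l ∈ Finset.univ.erase k, β k l)))) :
    ∃ βNE : Fin N → Fin N → ℝ,
      (∀ i, βNE i ∈ B i) ∧
      ∀ i, ∀ b ∈ B i, Cost i βNE ≤ Cost i (Function.update βNE i b) := by
  have hBm : ∀ i b, b ∈ B i ↔ (∀ j, 0 ≤ b j) ∧ (∑ j, b j) = φ i := by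
    intro i b; rw [hB]; rfl
  let K : Set (Fin N → Fin N → ℝ) := Set.univ.pi B
  have hKm : ∀ β, β ∈ K ↔ ∀ i, β i ∈ B i := fun β => by simp [K]
  have hBclosed : ∀ i, IsCompact (B i) := by
    intro i
    apply (isCompact_Icc (a := (0 : Fin N → ℝ)) (b := fun _ => φ i)).of_isClosed_subset
    · have : B i = {b | ∀ j, 0 ≤ b j} ∩ {b | ∑ j, b j = φ i} := by rw [hB]; rfl
      rw [this]
      apply IsClosed.inter
      · simp only [Set.ofPred_forall]
        exact isClosed_iInter fun j => isClosed_le continuous_const (continuous_apply j)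
      · exact isClosed_eq (by fun_prop) continuous_const
    · intro b hb
      rw [hBm] at hb
      refine ⟨fun j => hb.1 j, fun j => ?_⟩
      rw [← hb.2]
      exact Finset.single_le_sum (f := b) (fun k _ => hb.1 k) (Finset.mem_univ j)
  have hKcomp : IsCompact K := isCompact_univ_pi hBclosed
  have hBconv : ∀ i, Convex ℝ (B i) := by
    intro i x hx y hy a b ha hb hab
    rw [hBm] at hx hy ⊢
    refine ⟨fun j => ?_, ?_⟩
    · simp only [Pi.add_apply, Pi.smul_apply, smul_eq_mul]
      have := hx.1 j; have := hy.1 j; positivity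
    · simp only [Pi.add_apply, Pi.smul_apply, smul_eq_mul]
      rw [Finset.sum_add_distrib, ← Finset.mul_sum, ← Finset.mul_sum, hx.2, hy.2, ← add_mul, hab,
        one_mul]
  have hKconv : Convex ℝ K := convex_pi fun i _ => hBconv i
  have hKne : K.Nonempty := by
    refine ⟨fun i => Pi.single i (φ i), ?_⟩
    rw [hKm]
    intro i
    rw [hBm]
    refine ⟨fun j => ?_, by simp⟩
    by_cases h : j = i
    · subst h; simp [hφ]
    · simp [h]
  have hω : ∀ β ∈ K, ∀ j, 0 < μ j - ∑ k, β k j := by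
    intro β hβ j
    rw [hKm] at hβ
    have : ∑ k, β k j ≤ ∑ k, φ k := by
      apply Finset.sum_le_sum
      intro k _
      have := (hBm _ _).1 (hβ k)
      rw [← this.2]
      exact Finset.single_le_sum (f := β k) (fun l _ => this.1 l) (Finset.mem_univ j)
    have := hstab j
    linarith
  have hlam : ∀ β ∈ K, 0 < 1 - τ * (∑ k, ∑ l ∈ Finset.univ.erase k, β k l) := by
    intro β hβ
    rw [hKm] at hβ
    have : ∑ k, ∑ l ∈ Finset.univ.erase k, β k l ≤ ∑ k, φ k := by
      apply Finset.sum_le_sum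
      intro k _
      have := (hBm _ _).1 (hβ k)
      rw [← this.2]
      exact Finset.sum_le_sum_of_subset_of_nonneg (Finset.erase_subset _ _) (fun l _ _ => this.1 l)
    have := mul_le_mul_of_nonneg_left this hτ.le
    linarith
  have hupd : ∀ β ∈ K, ∀ i, ∀ b ∈ B i, Function.update β i b ∈ K := by
    intro β hβ i b hb
    rw [hKm] at hβ ⊢
    intro k
    by_cases h : k = i
    · subst h; simpa using hb
    · simpa [h] using hβ k
  have hCc : ∀ i, ContinuousOn (Cost i) K := by
    intro i
    rw [hCost]
    have hd : ∀ j, ContinuousOn (fun β : Fin N → Fin N → ℝ => V / (μ j - ∑ k, β k j)) K :=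
      fun j => continuousOn_const.div (by fun_prop) (fun β hβ => (hω β hβ j).ne')
    have hl : ContinuousOn (fun β : Fin N → Fin N → ℝ =>
        V * τ / (1 - τ * (∑ k, ∑ l ∈ Finset.univ.erase k, β k l))) K :=
      continuousOn_const.div (by fun_prop) (fun β hβ => (hlam β hβ).ne')
    have hc : ∀ j, ContinuousOn (fun β : Fin N → Fin N → ℝ => β i j) K := fun j => by fun_prop
    exact ((hc i).mul ((hd i).add continuousOn_const)).add
      (continuousOn_finsetSum _ fun j _ => (hc j).mul ((hd j).add hl))
  have hCconv : ∀ β ∈ K, ∀ i, ConvexOn ℝ K (fun γ => Cost i (Function.update β i (γ i))) := by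
    intro β hβ i
    let a : Fin N → ℝ := fun j => ∑ k ∈ Finset.univ.erase i, β k j
    let L : ℝ := ∑ k ∈ Finset.univ.erase i, ∑ l ∈ Finset.univ.erase k, β k l
    let pr : Fin N → (Fin N → Fin N → ℝ) →ₗ[ℝ] ℝ := fun j =>
      (LinearMap.proj j : (Fin N → ℝ) →ₗ[ℝ] ℝ).comp (LinearMap.proj i)
    have hpr : ∀ j γ, pr j γ = γ i j := fun j γ => rfl
    let S : (Fin N → Fin N → ℝ) →ₗ[ℝ] ℝ := τ • ∑ j ∈ Finset.univ.erase i, pr j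
    have hS : ∀ γ, S γ = τ * ∑ j ∈ Finset.univ.erase i, γ i j := fun γ => by
      simp [S, LinearMap.sum_apply, hpr]
    have ho : ∀ (γ : Fin N → Fin N → ℝ) j, ∑ k, Function.update β i (γ i) k j = γ i j + a j := by
      intro γ j
      rw [← Finset.add_sum_erase _ _ (Finset.mem_univ i)]
      simp only [Function.update_self, a]
      congr 1
      apply Finset.sum_congr rfl
      intro k hk
      rw [Function.update_of_ne (Finset.ne_of_mem_erase hk)]
    have hL : ∀ (γ : Fin N → Fin N → ℝ),
        ∑ k, ∑ l ∈ Finset.univ.erase k, Function.update β i (γ i) k l =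
        ∑ j ∈ Finset.univ.erase i, γ i j + L := by
      intro γ
      rw [← Finset.add_sum_erase _ _ (Finset.mem_univ i)]
      simp only [Function.update_self, L]
      congr 1
      apply Finset.sum_congr rfl
      intro k hk
      rw [Function.update_of_ne (Finset.ne_of_mem_erase hk)]
    have hposd : ∀ j, ∀ γ ∈ K, 0 < (μ j - a j) - pr j γ := by
      intro j γ hγ
      have := hω _ (hupd β hβ i (γ i) ((hKm γ).1 hγ i)) j
      rw [ho] at this
      rw [hpr]; linarith
    have hposl : ∀ γ ∈ K, 0 < (1 - τ * L) - S γ := by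
      intro γ hγ
      have := hlam _ (hupd β hβ i (γ i) ((hKm γ).1 hγ i))
      rw [hL] at this
      rw [hS]; linarith
    have hβ0 : ∀ j, 0 ≤ β i j := fun j => ((hBm _ _).1 ((hKm β).1 hβ i)).1 j
    have hD1 : ∀ j, 0 ≤ μ j - a j := fun j => by
      have := hposd j β hβ
      rw [hpr] at this
      have := hβ0 j
      linarith
    have hD2 : 0 ≤ 1 - τ * L := by
      have h1 := hposl β hβ
      rw [hS] at h1
      have h2 : 0 ≤ ∑ j ∈ Finset.univ.erase i, β i j := Finset.sum_nonneg fun j _ => hβ0 j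
      have := mul_nonneg hτ.le h2
      linarith
    have hform : (fun γ => Cost i (Function.update β i (γ i))) = fun γ =>
        (((κ * q i) • pr i) γ + ∑ j, V • (pr j γ / ((μ j - a j) - pr j γ))) +
          V • (S γ / ((1 - τ * L) - S γ)) := by
      funext γ
      rw [hCost]
      simp only [ho, hL, Function.update_self, hS, hpr, LinearMap.smul_apply, smul_eq_mul]
      rw [← Finset.add_sum_erase _ _ (Finset.mem_univ i)]
      simp only [mul_add, Finset.sum_add_distrib]
      rw [← Finset.sum_mul]
      have e1 : ∀ j, V * (γ i j / (μ j - a j - γ i j)) = γ i j * (V / (μ j - (γ i j + a j))) := by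
        intro j
        rw [show μ j - a j - γ i j = μ j - (γ i j + a j) by ring]; ring
      simp only [e1]
      rw [show 1 - τ * L - τ * ∑ j ∈ Finset.univ.erase i, γ i j =
        1 - (τ * ∑ j ∈ Finset.univ.erase i, γ i j + τ * L) by ring]
      ring
    rw [hform]
    have hsumc : ∀ s : Finset (Fin N),
        ConvexOn ℝ K (fun γ => ∑ j ∈ s, V • (pr j γ / ((μ j - a j) - pr j γ))) := by
      intro s
      induction s using Finset.induction_on with
      | empty => simpa using convexOn_const (0 : ℝ) hKconv
      | insert j s hj ih =>
        simp only [Finset.sum_insert hj]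
        exact ((convexOn_frac K hKconv (pr j) _ (hD1 j) (hposd j)).smul hV.le).add ih
    exact ((LinearMap.convexOn _ hKconv).add (hsumc _)).add
      ((convexOn_frac K hKconv S _ hD2 hposl).smul hV.le)
  obtain ⟨β, hβ, hmin⟩ := ky_fan K hKcomp hKconv hKne
    (fun β γ => ∑ i, (Cost i (Function.update β i (γ i)) - Cost i β))
    (by
      intro γ hγ
      apply continuousOn_finsetSum
      intro i _
      refine ContinuousOn.sub ?_ (hCc i)
      refine (hCc i).comp (Continuous.continuousOn ?_)
        (fun β hβ => hupd β hβ i (γ i) ((hKm γ).1 hγ i))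
      exact continuous_id.update i continuous_const)
    (by
      intro β hβ
      have : ∀ s : Finset (Fin N), ConvexOn ℝ K
          (fun γ => ∑ i ∈ s, (Cost i (Function.update β i (γ i)) - Cost i β)) := by
        intro s
        induction s using Finset.induction_on with
        | empty => simpa using convexOn_const (0 : ℝ) hKconv
        | insert j s hj ih =>
          simp only [Finset.sum_insert hj]
          exact ((hCconv β hβ j).sub (concaveOn_const _ hKconv)).add ih
      exact this _)
    (by intro β hβ; simp)
  refine ⟨β, (hKm β).1 hβ, ?_⟩
  intro i b hb
  have h := hmin _ (hupd β hβ i b hb)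
  rw [← Finset.add_sum_erase _ _ (Finset.mem_univ i)] at h
  rw [Finset.sum_eq_zero (s := Finset.univ.erase i) (by
    intro k hk
    rw [Function.update_of_ne (Finset.ne_of_mem_erase hk), Function.update_eq_self, sub_self])] at h
  simp only [Function.update_self, add_zero] at h
  linarith
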